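/- arXiv:1812.11313 — 2 statements merged into one kernel-verified Lean document; each statement's English description precedes it below -/
import Mathlib

section
/- Let 𝒜 be an S-ring over a finite abelian group G which is the S-wreath product for some 𝒜-section S = U/L. Suppose that 𝒜_U and 𝒜_{G/L} are separable with respect to 𝒦_A and that Aut(𝒜_U)^S = Aut(𝒜_S). Then 𝒜 is separable with respect to 𝒦_A. In particular, the wreath product of two S-rings over abelian groups, each separable with respect to 𝒦_A, is separable with respect to 𝒦_A. -/
/-!
An algebraic isomorphism `φ` from `A` to an S-ring over `H` is encoded by the relation `r g h`
between elements saying that `h` lies in the image of the basic set of `g` (`GoodRel`). In this form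
it restricts to `A_U` (`GoodRel.restrict`) and passes to `A_{G/L}` (`GoodRel.quotient`), with targets
over the image `U'` of `U` and over `H / L'`, where `L'` is the image of `L`. Separability of `A_U`
and of `A_{G/L}` provides `f₁ : U → U'` and `f₂ : G / L → H / L'` inducing these two relations.

The two maps are glued in `sepRel_of_lift`. For `t` in `G`, the map
`u L ↦ f₂ (u t L) * (f₂ (t L))⁻¹` from `U / L` to `U' / L'` induces the same algebraic isomorphism
of `A_S` as the map induced by `f₁`, so the two differ by an element of `Aut(A_S)`. The latter lifts
to `Aut(A_U)` by hypothesis, and composing `f₁` with the lift gives `k t : U → U'` which induces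
`φ` on `A_U` and lifts the map above. Choosing a representative `t` of each coset of `U` and a lift
`t'` of `f₂ (t L)`, put `f (u t) = k t u * t'`. Then `f` is a bijection lifting `f₂`. It respects
basic sets inside `U` because every `k t` does, and basic sets outside `U` because `f₂` does and
these are unions of `L`-cosets.

The target groups in the three separability assertions may live in different universes, which is
harmless by `SepRel.lift`. For the wreath product, `U / L` is trivial and there is nothing to lift.
-/

open scoped Pointwise

namespace SRingPaper

/-- The number of representations of `z` as `x * y` with `x ∈ X`, `y ∈ Y`
(the structure constant `c^Z_{X,Y}` evaluated at `z ∈ Z`). -/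
noncomputable def structConst {G : Type*} [Group G] (X Y : Set G) (z : G) : ℕ :=
  Nat.card {p : G × G // p.1 ∈ X ∧ p.2 ∈ Y ∧ p.1 * p.2 = z}

/-- An S-ring (Schur ring) over a finite group `G`, given by its partition of `G`
into basic sets: the partition contains `{1}`, is closed under taking inverses,
and the structure constants are constant on each class (equivalently, the
ℤ-span of the indicator elements of the classes is a subring of ℤG). -/
structure SRing (G : Type*) [Group G] [Finite G] where
  parts : Set (Set G)
  nonempty_mem : ∀ X ∈ parts, X.Nonempty
  exists_mem : ∀ g : G, ∃ X ∈ parts, g ∈ X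
  eq_of_mem : ∀ X ∈ parts, ∀ Y ∈ parts, ∀ g : G, g ∈ X → g ∈ Y → X = Y
  one_mem : ({1} : Set G) ∈ parts
  inv_mem : ∀ X ∈ parts, X⁻¹ ∈ parts
  structConst_const : ∀ X ∈ parts, ∀ Y ∈ parts, ∀ Z ∈ parts, ∀ z ∈ Z, ∀ z' ∈ Z,
    structConst X Y z = structConst X Y z'

/-- `R(X) = {(g, x*g) : x ∈ X, g ∈ G}`, the edge set of the Cayley graph `Cay(G,X)`. -/
def RSet {G : Type*} [Group G] (X : Set G) : Set (G × G) :=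
  {p | ∃ x ∈ X, p.2 = x * p.1}

/-- The image of a binary relation under a map applied to both coordinates. -/
def mapRel {G G' : Type*} (f : G → G') (R : Set (G × G)) : Set (G' × G') :=
  (fun p : G × G => (f p.1, f p.2)) '' R

section Defs

variable {G G' : Type*} [Group G] [Finite G] [Group G'] [Finite G']

/-- A combinatorial isomorphism from the S-ring `A` to the S-ring `B`. -/
structure IsIso (A : SRing G) (B : SRing G') (f : G → G') : Prop where
  bijective : Function.Bijective f
  image_eq : (fun X : Set G => mapRel f (RSet X)) '' A.parts = RSet '' B.parts

/-- An algebraic isomorphism from the S-ring `A` to the S-ring `B`: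
a bijection between the basic sets preserving all structure constants. -/
structure IsAlgIso (A : SRing G) (B : SRing G') (φ : Set G → Set G') : Prop where
  bijOn : Set.BijOn φ A.parts B.parts
  structConst_eq : ∀ X ∈ A.parts, ∀ Y ∈ A.parts, ∀ Z ∈ A.parts,
    ∀ z ∈ Z, ∀ z' ∈ φ Z, structConst X Y z = structConst (φ X) (φ Y) z'

/-- The algebraic isomorphism `φ` is induced by the combinatorial isomorphism `f`
(i.e. `φ = φ_f`). -/
def InducedBy (A : SRing G) (φ : Set G → Set G') (f : G → G') : Prop :=
  Function.Bijective f ∧ ∀ X ∈ A.parts, mapRel f (RSet X) = RSet (φ X)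

/-- `A` is separable with respect to the class `𝒦_A` of finite abelian groups. -/
def SepAbelian (A : SRing G) : Prop :=
  ∀ (H : Type*) [CommGroup H] [Finite H] (B : SRing H) (φ : Set G → Set H),
    IsAlgIso A B φ → ∃ f : G → H, InducedBy A φ f

/-- `A` is separable with respect to the class `𝒦_C` of finite cyclic groups. -/
def SepCyclic (A : SRing G) : Prop :=
  ∀ (H : Type*) [Group H] [Finite H], IsCyclic H → ∀ (B : SRing H) (φ : Set G → Set H),
    IsAlgIso A B φ → ∃ f : G → H, InducedBy A φ f

/-- `A` is schurian: `A = V(K, G)` for some group `K` with `G_right ≤ K ≤ Sym(G)`,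
i.e. the basic sets of `A` are the orbits on `G` of the stabilizer of `1` in `K`. -/
def IsSchurian (A : SRing G) : Prop :=
  ∃ K : Subgroup (Equiv.Perm G),
    (∀ g : G, Equiv.mulRight g ∈ K) ∧
    A.parts = {X : Set G | ∃ g : G, X = {h : G | ∃ f ∈ K, f 1 = 1 ∧ f g = h}}

lemma mapRel_comp {A B C : Type*} (f : B → C) (g : A → B) (R : Set (A × A)) :
    mapRel (f ∘ g) R = mapRel f (mapRel g R) := by
  simp only [mapRel, Set.image_image]
  rfl

lemma mapRel_id {A : Type*} (R : Set (A × A)) : mapRel (fun x => x) R = R := by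
  simp [mapRel]

/-- The automorphism group `Aut(A)` of an S-ring, as a subgroup of `Sym(G)`. -/
def autSubgroup (A : SRing G) : Subgroup (Equiv.Perm G) where
  carrier := {f : Equiv.Perm G | ∀ X ∈ A.parts, mapRel f (RSet X) = RSet X}
  one_mem' := by
    intro X hX
    have h : ⇑(1 : Equiv.Perm G) = fun x => x := rfl
    rw [h, mapRel_id]
  mul_mem' := by
    intro f g hf hg X hX
    have h : ⇑(f * g) = ⇑f ∘ ⇑g := rfl
    rw [h, mapRel_comp, hg X hX, hf X hX]
  inv_mem' := by
    intro f hf X hX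
    conv_lhs => rw [← hf X hX]
    rw [← mapRel_comp]
    have h : ⇑f⁻¹ ∘ ⇑f = fun x => x := by
      funext x
      simp
    rw [h, mapRel_id]

/-- `A` is a normal S-ring: `G_right` is normal in `Aut(A)`. -/
def IsNormalSRing (A : SRing G) : Prop :=
  ∀ f ∈ autSubgroup A, ∀ g : G,
    ∃ g' : G, f * (Equiv.mulRight g : Equiv.Perm G) * f⁻¹ = Equiv.mulRight g'

/-- The partition of `G` into the orbits of `K ≤ Aut(G)`: the basic sets of the
cyclotomic S-ring `cyc(K, G)`. -/
def cycParts (K : Subgroup (MulAut G)) : Set (Set G) :=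
  {X : Set G | ∃ g : G, X = {h : G | ∃ f ∈ K, f g = h}}

/-- `H` is an `A`-subgroup: `H` is a union of basic sets of `A`. -/
def IsASubgroup (A : SRing G) (H : Subgroup G) : Prop :=
  ∀ X ∈ A.parts, X ⊆ (H : Set G) ∨ Disjoint X (H : Set G)

/-- `rad(X) = {g ∈ G : gX = Xg = X}`. -/
def radSet (X : Set G) : Set G :=
  {g : G | (fun x => g * x) '' X = X ∧ (fun x => x * g) '' X = X}

/-- A subset of a cyclic group is highest if it contains a generator. -/
def IsHighest (X : Set G) : Prop :=
  ∃ x ∈ X, ∀ g : G, g ∈ Subgroup.zpowers x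

/-- `A` is the `S`-wreath product with respect to the section `S = U/L`:
`U` and `L` are `A`-subgroups, `L ≤ U`, `L` is normal in `G`, and every basic
set outside `U` has `L` in its radical. -/
def IsSWreath (A : SRing G) (U L : Subgroup G) : Prop :=
  IsASubgroup A U ∧ IsASubgroup A L ∧ L ≤ U ∧ L.Normal ∧
    ∀ X ∈ A.parts, ¬ X ⊆ (U : Set G) → (L : Set G) ⊆ radSet X

/-- `AU` is the restriction `A_U` of `A` to the `A`-subgroup `U`. -/
def IsRestriction (A : SRing G) (U : Subgroup G) (AU : SRing ↥U) : Prop :=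
  AU.parts = {Y : Set ↥U | ∃ X ∈ A.parts, X ⊆ (U : Set G) ∧ Y = (Subtype.val ⁻¹' X : Set ↥U)}

/-- `AQ` is the quotient S-ring `A_{G/L}`. -/
def IsQuotientSRing (A : SRing G) (L : Subgroup G) [L.Normal] (AQ : SRing (G ⧸ L)) : Prop :=
  AQ.parts = {Y : Set (G ⧸ L) | ∃ X ∈ A.parts, Y = ((QuotientGroup.mk : G → G ⧸ L) '' X)}

/-- The orbit of a pair under a permutation group, for the definition of 2-equivalence. -/
def orb2 {Ω : Type*} (K : Subgroup (Equiv.Perm Ω)) (p : Ω × Ω) : Set (Ω × Ω) :=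
  {q : Ω × Ω | ∃ f ∈ K, (f p.1, f p.2) = q}

/-- Two permutation groups are 2-equivalent if they have the same orbits on `Ω × Ω`. -/
def TwoEquiv {Ω : Type*} (K K' : Subgroup (Equiv.Perm Ω)) : Prop :=
  {S : Set (Ω × Ω) | ∃ p, S = orb2 K p} = {S : Set (Ω × Ω) | ∃ p, S = orb2 K' p}

/-- A permutation group is 2-isolated if it is the only group 2-equivalent to it. -/
def TwoIsolated {Ω : Type*} (K : Subgroup (Equiv.Perm Ω)) : Prop :=
  ∀ K' : Subgroup (Equiv.Perm Ω), TwoEquiv K K' → K' = K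

end Defs

/-- `Aut(A)^S` for the section `S = G/N`: the permutations of `G/N` induced by
automorphisms of `A` permuting the `N`-cosets. -/
def inducedOnQuotient {G : Type*} [Group G] [Finite G] (A : SRing G) (N : Subgroup G)
    [N.Normal] : Set ((G ⧸ N) → (G ⧸ N)) :=
  {q : (G ⧸ N) → (G ⧸ N) | ∃ f : Equiv.Perm G, f ∈ autSubgroup A ∧
    (∀ u v : G, (u : G ⧸ N) = (v : G ⧸ N) → ((f u : G) : G ⧸ N) = ((f v : G) : G ⧸ N)) ∧
    ∀ u : G, q (u : G ⧸ N) = ((f u : G) : G ⧸ N)}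

end SRingPaper

namespace SRingPaper

/-! ### Algebraic isomorphisms as relations between elements -/

/-- `g` and `g'` lie in a common basic set of `A`. -/
def Eqv {G : Type*} [Group G] [Finite G] (A : SRing G) (g g' : G) : Prop :=
  ∃ X ∈ A.parts, g ∈ X ∧ g' ∈ X

/-- An algebraic isomorphism `φ` from `A` to an S-ring over `H`, encoded by the relation
`r g h` meaning that `h` lies in the image under `φ` of the basic set of `g`. The target S-ring is
not mentioned: its basic sets are the sets `{h | r g h}`. Preservation of structure constants is
the field `count`: factorizations of `z` and of `z'` correspond bijectively, respecting `r` in both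
factors. -/
structure GoodRel {G H : Type*} [Group G] [Finite G] [Group H] (A : SRing G)
    (r : G → H → Prop) : Prop where
  left : ∀ g, ∃ h, r g h
  right : ∀ h, ∃ g, r g h
  eqv : ∀ g g' h, r g h → (r g' h ↔ Eqv A g g')
  one : ∀ h, r 1 h → h = 1
  count : ∀ z z', r z z' → ∃ e : G ≃ H, ∀ x, r x (e x) ∧ r (x⁻¹ * z) ((e x)⁻¹ * z')

/-- Separability with respect to finite abelian groups, for algebraic isomorphisms given as
relations. -/
def SepRel {G : Type*} [Group G] [Finite G] (A : SRing G) : Prop :=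
  ∀ (H : Type*) [CommGroup H] [Finite H] (r : G → H → Prop), GoodRel A r →
    ∃ f : G → H, Function.Bijective f ∧ ∀ x g, r x (f (x * g) * (f g)⁻¹)

section Basic

variable {G : Type*} [Group G] [Finite G] {A : SRing G}

lemma Eqv.rfl' (g : G) : Eqv A g g := by
  obtain ⟨X, hX, hg⟩ := A.exists_mem g
  exact ⟨X, hX, hg, hg⟩

lemma Eqv.symm' {g g' : G} (h : Eqv A g g') : Eqv A g' g := by
  obtain ⟨X, hX, a, b⟩ := h
  exact ⟨X, hX, b, a⟩

lemma Eqv.mem_iff {g g' : G} (h : Eqv A g g') {X : Set G} (hX : X ∈ A.parts) :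
    g ∈ X ↔ g' ∈ X := by
  obtain ⟨Y, hY, a, b⟩ := h
  constructor
  · intro c
    rwa [A.eq_of_mem X hX Y hY g c a]
  · intro c
    rwa [A.eq_of_mem X hX Y hY g' c b]

lemma mem_iff_eqv {g g' : G} {X : Set G} (hX : X ∈ A.parts) (hg : g ∈ X) :
    g' ∈ X ↔ Eqv A g g' :=
  ⟨fun h => ⟨X, hX, hg, h⟩, fun h => (h.mem_iff hX).1 hg⟩

lemma Eqv.inv' {g g' : G} (h : Eqv A g g') : Eqv A g⁻¹ g'⁻¹ := by
  obtain ⟨X, hX, a, b⟩ := h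
  exact ⟨X⁻¹, A.inv_mem X hX, by simpa using a, by simpa using b⟩

lemma Eqv.mem_subgroup {g g' : G} (h : Eqv A g g') {U : Subgroup G} (hU : IsASubgroup A U)
    (hg : g ∈ U) : g' ∈ U := by
  obtain ⟨X, hX, a, b⟩ := h
  rcases hU X hX with h | h
  · exact h b
  · exact absurd hg (Set.disjoint_left.1 h a)

/-- Maps that move every difference inside its own basic set are automorphisms: the inclusions
`R(X)^e ⊆ R(X)` are equalities because the relations `R(X)` partition `G × G`. -/
lemma mem_autSubgroup (e : Equiv.Perm G) (h : ∀ x g, Eqv A x (e (x * g) * (e g)⁻¹)) :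
    e ∈ autSubgroup A := by
  intro X hX
  ext ⟨a, b⟩
  constructor
  · rintro ⟨⟨g, g'⟩, ⟨x, hx, hg⟩, hp⟩
    simp only [Prod.mk.injEq] at hp hg
    obtain ⟨rfl, rfl⟩ := hp
    subst hg
    exact ⟨e (x * g) * (e g)⁻¹, ((h x g).mem_iff hX).1 hx, by simp⟩
  · rintro ⟨x, hx, hb⟩
    simp only at hb
    refine ⟨(e.symm a, e.symm b), ⟨e.symm b * (e.symm a)⁻¹, ?_, by simp⟩, by simp⟩
    have := h (e.symm b * (e.symm a)⁻¹) (e.symm a)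
    rw [this.mem_iff hX]
    simpa [hb] using hx

lemma eqv_of_mem_autSubgroup {e : Equiv.Perm G} (he : e ∈ autSubgroup A) (x g : G) :
    Eqv A x (e (x * g) * (e g)⁻¹) := by
  obtain ⟨X, hX, hx⟩ := A.exists_mem x
  have h1 : (e g, e (x * g)) ∈ mapRel e (RSet X) := ⟨(g, x * g), ⟨x, hx, rfl⟩, rfl⟩
  rw [he X hX] at h1
  obtain ⟨y, hy, h2⟩ := h1
  simp only at h2
  exact ⟨X, hX, hx, by simpa [h2] using hy⟩

lemma eqv_restriction_iff {U : Subgroup G} (hU : IsASubgroup A U) {AU : SRing U}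
    (hAU : IsRestriction A U AU) (u v : U) : Eqv AU u v ↔ Eqv A (u : G) v := by
  unfold IsRestriction at hAU
  constructor
  · rintro ⟨Y, hY, a, b⟩
    rw [hAU] at hY
    obtain ⟨X, hX, -, rfl⟩ := hY
    exact ⟨X, hX, a, b⟩
  · rintro ⟨X, hX, a, b⟩
    refine ⟨Subtype.val ⁻¹' X, ?_, a, b⟩
    rw [hAU]
    refine ⟨X, hX, ?_, rfl⟩
    rcases hU X hX with h | h
    · exact h
    · exact absurd u.2 (Set.disjoint_left.1 h a)

lemma eqv_quotient_iff {L : Subgroup G} [L.Normal] {AQ : SRing (G ⧸ L)}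
    (hAQ : IsQuotientSRing A L AQ) (a b : G ⧸ L) :
    Eqv AQ a b ↔ ∃ x y : G, Eqv A x y ∧ (x : G ⧸ L) = a ∧ (y : G ⧸ L) = b := by
  unfold IsQuotientSRing at hAQ
  constructor
  · rintro ⟨Y, hY, ha, hb⟩
    rw [hAQ] at hY
    obtain ⟨X, hX, rfl⟩ := hY
    obtain ⟨x, hx, rfl⟩ := ha
    obtain ⟨y, hy, rfl⟩ := hb
    exact ⟨x, y, ⟨X, hX, hx, hy⟩, rfl, rfl⟩
  · rintro ⟨x, y, ⟨X, hX, hx, hy⟩, rfl, rfl⟩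
    refine ⟨QuotientGroup.mk '' X, ?_, ⟨x, hx, rfl⟩, ⟨y, hy, rfl⟩⟩
    rw [hAQ]
    exact ⟨X, hX, rfl⟩

end Basic

section Rel

variable {G H : Type*} [Group G] [Finite G] [Group H] {A : SRing G} {r : G → H → Prop}

lemma GoodRel.congr_left (hr : GoodRel A r) {g g' : G} {h : H} (h1 : r g h)
    (h2 : Eqv A g g') : r g' h := (hr.eqv g g' h h1).2 h2

lemma GoodRel.to_eqv (hr : GoodRel A r) {g g' : G} {h : H} (h1 : r g h)
    (h2 : r g' h) : Eqv A g g' := (hr.eqv g g' h h1).1 h2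

lemma GoodRel.rel_one (hr : GoodRel A r) : r 1 1 := by
  obtain ⟨h, hh⟩ := hr.left 1
  rwa [hr.one h hh] at hh

lemma GoodRel.inv (hr : GoodRel A r) {g : G} {h : H} (h1 : r g h) : r g⁻¹ h⁻¹ := by
  obtain ⟨e, he⟩ := hr.count 1 1 hr.rel_one
  have h2 := he (e.symm h)
  simp only [mul_one, e.apply_symm_apply] at h2
  exact hr.congr_left h2.2 (hr.to_eqv h2.1 h1).inv'

/-- A factorization of an element lifts to a factorization of any related element. -/
lemma GoodRel.mul_lift (hr : GoodRel A r) {x y : G} {z' : H} (h : r (x * y) z') :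
    ∃ x' y', r x x' ∧ r y y' ∧ x' * y' = z' := by
  obtain ⟨e, he⟩ := hr.count _ _ h
  exact ⟨e x, (e x)⁻¹ * z', (he x).1, by simpa using (he x).2, by simp⟩

/-- A factorization on the `H` side descends to the `G` side. -/
lemma GoodRel.mul_desc (hr : GoodRel A r) {z : G} {x' y' : H} (h : r z (x' * y')) :
    ∃ x y, r x x' ∧ r y y' ∧ x * y = z := by
  obtain ⟨e, he⟩ := hr.count _ _ h
  have h2 := he (e.symm x')
  simp only [e.apply_symm_apply, inv_mul_cancel_left] at h2
  exact ⟨e.symm x', (e.symm x')⁻¹ * z, h2.1, h2.2, by simp⟩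

/-- The image of an `A`-subgroup under an algebraic isomorphism. -/
def GoodRel.img (hr : GoodRel A r) {U : Subgroup G} (hU : IsASubgroup A U) : Subgroup H where
  carrier := {h | ∃ u ∈ U, r u h}
  one_mem' := ⟨1, U.one_mem, hr.rel_one⟩
  inv_mem' := by
    rintro h ⟨u, hu, hr'⟩
    exact ⟨u⁻¹, U.inv_mem hu, hr.inv hr'⟩
  mul_mem' := by
    rintro a b ⟨u, hu, ha⟩ ⟨v, hv, hb⟩
    obtain ⟨z, hz⟩ := hr.right (a * b)
    obtain ⟨x, y, hx, hy, rfl⟩ := hr.mul_desc hz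
    exact ⟨x * y, U.mul_mem ((hr.to_eqv ha hx).mem_subgroup hU hu)
      ((hr.to_eqv hb hy).mem_subgroup hU hv), hz⟩

lemma GoodRel.mem_img (hr : GoodRel A r) {U : Subgroup G} (hU : IsASubgroup A U) {g : G} {h : H}
    (h1 : r g h) : h ∈ hr.img hU ↔ g ∈ U :=
  ⟨fun ⟨_, hu, h2⟩ => (hr.to_eqv h2 h1).mem_subgroup hU hu, fun hg => ⟨g, hg, h1⟩⟩

lemma GoodRel.restrict (hr : GoodRel A r) {U : Subgroup G} (hU : IsASubgroup A U) {AU : SRing U}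
    (hAU : IsRestriction A U AU) :
    GoodRel AU (fun (u : U) (h : hr.img hU) => r u h) where
  left u := by
    obtain ⟨h, hh⟩ := hr.left u
    exact ⟨⟨h, u, u.2, hh⟩, hh⟩
  right := by
    rintro ⟨h, u, hu, hh⟩
    exact ⟨⟨u, hu⟩, hh⟩
  eqv g g' h h1 := by
    rw [eqv_restriction_iff hU hAU]
    exact hr.eqv _ _ _ h1
  one h h1 := Subtype.ext (hr.one _ h1)
  count z z' h := by
    obtain ⟨e, he⟩ := hr.count _ _ h
    exact ⟨e.subtypeEquiv fun x => (hr.mem_img hU (he x).1).symm, fun x => he x⟩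

/-- A bijection respecting colourings exists once all colour classes have equal size. -/
lemma exists_equiv_of_card {α β C : Type*} [Finite α] [Finite β] (k : α → C) (k' : β → C)
    (h : ∀ c, Nat.card {a // k a = c} = Nat.card {b // k' b = c}) :
    ∃ e : α ≃ β, ∀ a, k' (e a) = k a := by
  refine ⟨Equiv.ofFiberEquiv (f := k) (g := k') fun c => ?_, fun a => Equiv.ofFiberEquiv_map _ a⟩
  exact (Finite.equivFin _).trans ((finCongr (h c)).trans (Finite.equivFin _).symm)

end Rel

/-! ### Comparison of the two notions of separability -/

section Compare

variable {G H : Type*} [Group G] [Finite G] {A : SRing G}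

lemma structConst_eq_card {K : Type*} [Group K] (P Q : Set K) (w : K) :
    structConst P Q w = Nat.card {x : K // x ∈ P ∧ x⁻¹ * w ∈ Q} := by
  refine Nat.card_congr ⟨fun p => ⟨p.1.1, p.2.1, ?_⟩, fun x => ⟨(x.1, x.1⁻¹ * w), x.2.1, x.2.2,
    by simp⟩, ?_, fun x => rfl⟩
  · obtain ⟨⟨a, b⟩, h1, h2, rfl⟩ := p
    simpa using h2
  · rintro ⟨⟨a, b⟩, h1, h2, rfl⟩
    simp

lemma GoodRel.structConst_eq [Group H] {r : G → H → Prop} (hr : GoodRel A r) (g₁ g₂ : G)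
    {z : G} {z' : H} (h : r z z') :
    structConst {h | r g₁ h} {h | r g₂ h} z' =
      structConst {x | Eqv A g₁ x} {x | Eqv A g₂ x} z := by
  obtain ⟨e, he⟩ := hr.count _ _ h
  have key : ∀ (g x : G) (y : H), r x y → (Eqv A g x ↔ r g y) := fun g x y hxy =>
    ⟨fun h => hr.congr_left hxy h.symm', fun h => hr.to_eqv h hxy⟩
  rw [structConst_eq_card, structConst_eq_card]
  refine (Nat.card_congr (e.subtypeEquiv fun x => ?_)).symm
  simp only [Set.mem_ofPred_eq]
  rw [key _ _ _ (he x).1, key _ _ _ (he x).2]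

lemma setOf_eqv_mem (A : SRing G) (g : G) : {x | Eqv A g x} ∈ A.parts := by
  obtain ⟨X, hX, hg⟩ := A.exists_mem g
  have : {x | Eqv A g x} = X := Set.ext fun x => (mem_iff_eqv hX hg).symm
  rwa [this]

lemma eq_setOf_eqv {X : Set G} (hX : X ∈ A.parts) {g : G} (hg : g ∈ X) :
    X = {x | Eqv A g x} := Set.ext fun _ => mem_iff_eqv hX hg

lemma setOf_eqv_eq_iff {X : Set G} (hX : X ∈ A.parts) (g : G) :
    {x | Eqv A g x} = X ↔ g ∈ X := by
  constructor
  · rintro rfl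
    exact Eqv.rfl' g
  · intro h
    exact (eq_setOf_eqv hX h).symm

lemma GoodRel.inv_iff [Group H] {r : G → H → Prop} (hr : GoodRel A r) {g : G} {h : H} :
    r g⁻¹ h ↔ r g h⁻¹ :=
  ⟨fun h1 => by simpa using hr.inv h1, fun h1 => by simpa using hr.inv h1⟩

/-- The target S-ring of an algebraic isomorphism given as a relation. -/
def GoodRel.target [Group H] [Finite H] {r : G → H → Prop} (hr : GoodRel A r) : SRing H where
  parts := Set.range fun g => {h | r g h}
  nonempty_mem := by
    rintro _ ⟨g, rfl⟩
    exact hr.left g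
  exists_mem h := by
    obtain ⟨g, hg⟩ := hr.right h
    exact ⟨_, ⟨g, rfl⟩, hg⟩
  eq_of_mem := by
    rintro _ ⟨g₁, rfl⟩ _ ⟨g₂, rfl⟩ h h1 h2
    have h3 : Eqv A g₁ g₂ := hr.to_eqv h1 h2
    exact Set.ext fun x => ⟨fun h => hr.congr_left h h3, fun h => hr.congr_left h h3.symm'⟩
  one_mem := by
    refine ⟨1, Set.ext fun h => ⟨fun h1 => hr.one h h1, ?_⟩⟩
    rintro rfl
    exact hr.rel_one
  inv_mem := by
    rintro _ ⟨g, rfl⟩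
    exact ⟨g⁻¹, Set.ext fun h => hr.inv_iff⟩
  structConst_const := by
    rintro _ ⟨g₁, rfl⟩ _ ⟨g₂, rfl⟩ _ ⟨g₃, rfl⟩ z hz z' hz'
    rw [hr.structConst_eq g₁ g₂ hz, hr.structConst_eq g₁ g₂ hz']

lemma SepAbelian.sepRel.{u, v} {G : Type u} [Group G] [Finite G] {A : SRing G}
    (hA : SepAbelian.{u, v} A) : SepRel.{u, v} A := by
  intro H _ _ r hr
  have hφ : ∀ g, {h | ∃ x ∈ {x | Eqv A g x}, r x h} = {h | r g h} := fun g =>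
    Set.ext fun h => ⟨fun ⟨x, hx, hxh⟩ => hr.congr_left hxh hx.symm',
      fun h1 => ⟨g, Eqv.rfl' g, h1⟩⟩
  have hsurj : ∀ X ∈ A.parts, ∃ g, X = {x | Eqv A g x} := fun X hX =>
    let ⟨g, hg⟩ := A.nonempty_mem X hX
    ⟨g, eq_setOf_eqv hX hg⟩
  obtain ⟨f, hf, hf'⟩ := hA H hr.target (fun X => {h | ∃ x ∈ X, r x h}) (by
    refine ⟨⟨?_, ?_, ?_⟩, ?_⟩
    · intro X hX
      obtain ⟨g, rfl⟩ := hsurj X hX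
      exact ⟨g, (hφ g).symm⟩
    · intro X hX Y hY hXY
      obtain ⟨g, rfl⟩ := hsurj X hX
      obtain ⟨g', rfl⟩ := hsurj Y hY
      simp only at hXY
      rw [hφ, hφ] at hXY
      obtain ⟨h, hh⟩ := hr.left g
      have hh' : h ∈ {h | r g' h} := by rw [← hXY]; exact hh
      refine A.eq_of_mem _ hX _ hY g (Eqv.rfl' g) ?_
      exact hr.to_eqv hh' hh
    · rintro _ ⟨g, rfl⟩
      exact ⟨_, setOf_eqv_mem A g, hφ g⟩
    · intro X hX Y hY Z hZ z hz z' hz'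
      obtain ⟨g, rfl⟩ := hsurj X hX
      obtain ⟨g', rfl⟩ := hsurj Y hY
      obtain ⟨g'', rfl⟩ := hsurj Z hZ
      rw [hφ] at hz'
      rw [hφ, hφ]
      exact (hr.structConst_eq g g' (hr.congr_left hz' hz)).symm)
  beta_reduce at hf'
  refine ⟨f, hf, fun x g => ?_⟩
  have h1 : (f g, f (x * g)) ∈ mapRel f (RSet {y | Eqv A x y}) :=
    ⟨(g, x * g), ⟨x, Eqv.rfl' x, rfl⟩, rfl⟩
  rw [hf' _ (setOf_eqv_mem A x), hφ] at h1
  obtain ⟨y, hy, h2⟩ := h1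
  simp only at h2
  rw [h2]
  simpa using hy

/-- The bijection required by `GoodRel.count` is assembled from the equalities of structure
constants: the elements `x` of `G` are coloured by the images under `φ` of the basic sets of `x`
and `x⁻¹ * z`, so that the colour classes are counted by structure constants. -/
lemma IsAlgIso.goodRel [Group H] [Finite H] {B : SRing H} {φ : Set G → Set H}
    (hφ : IsAlgIso A B φ) : GoodRel A (fun g h => ∃ X ∈ A.parts, g ∈ X ∧ h ∈ φ X) where
  left g := by
    obtain ⟨X, hX, hg⟩ := A.exists_mem g
    obtain ⟨h, hh⟩ := B.nonempty_mem _ (hφ.bijOn.mapsTo hX)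
    exact ⟨h, X, hX, hg, hh⟩
  right h := by
    obtain ⟨Y, hY, hh⟩ := B.exists_mem h
    obtain ⟨X, hX, rfl⟩ := hφ.bijOn.surjOn hY
    obtain ⟨g, hg⟩ := A.nonempty_mem _ hX
    exact ⟨g, X, hX, hg, hh⟩
  eqv := by
    rintro g g' h ⟨X, hX, hg, hh⟩
    constructor
    · rintro ⟨Y, hY, hg', hh'⟩
      have h1 := B.eq_of_mem _ (hφ.bijOn.mapsTo hX) _ (hφ.bijOn.mapsTo hY) h hh hh'
      have h2 := hφ.bijOn.injOn hX hY h1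
      subst h2
      exact ⟨X, hX, hg, hg'⟩
    · intro h1
      exact ⟨X, hX, (h1.mem_iff hX).1 hg, hh⟩
  one := by
    rintro h ⟨X, hX, h1, hh⟩
    obtain rfl := A.eq_of_mem X hX _ A.one_mem 1 h1 rfl
    -- `{1}` is recognized by `c^Z_{Z,{1}} ≠ 0`, applied to the basic set `Z` mapped to `{1}`.
    obtain ⟨Z, hZ, hZ1⟩ := hφ.bijOn.surjOn B.one_mem
    obtain ⟨z, hz⟩ := A.nonempty_mem Z hZ
    have h2 := hφ.structConst_eq Z hZ _ hX Z hZ z hz 1 (by rw [hZ1]; rfl)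
    have h3 : structConst Z {1} z ≠ 0 := by
      unfold structConst
      rw [← Nat.pos_iff_ne_zero, Nat.card_pos_iff]
      exact ⟨⟨⟨(z, 1), hz, rfl, mul_one z⟩⟩, inferInstance⟩
    rw [h2] at h3
    unfold structConst at h3
    obtain ⟨⟨⟨⟨a, b⟩, ha, hb, hab⟩⟩, -⟩ := Nat.card_pos_iff.1 (Nat.pos_of_ne_zero h3)
    rw [hZ1] at ha
    simp only at ha hb hab
    obtain rfl : a = 1 := ha
    rw [one_mul] at hab
    subst hab
    have h4 := B.eq_of_mem _ (hφ.bijOn.mapsTo hX) _ B.one_mem 1 hb rfl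
    rw [h4] at hh
    exact hh
  count := by
    rintro z z' ⟨Z, hZ, hz, hz'⟩
    obtain ⟨e, he⟩ := exists_equiv_of_card
      (fun x : G => (φ {y | Eqv A x y}, φ {y | Eqv A (x⁻¹ * z) y}))
      (fun x : H => ({y | Eqv B x y}, {y | Eqv B (x⁻¹ * z') y})) (by
        rintro ⟨P, Q⟩
        simp only [Prod.mk.injEq]
        by_cases hc : P ∈ B.parts ∧ Q ∈ B.parts
        · obtain ⟨hP, hQ⟩ := hc
          obtain ⟨X, hX, rfl⟩ := hφ.bijOn.surjOn hP
          obtain ⟨Y, hY, rfl⟩ := hφ.bijOn.surjOn hQ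
          have h1 := hφ.structConst_eq X hX Y hY Z hZ z hz z' hz'
          rw [structConst_eq_card, structConst_eq_card] at h1
          convert h1 using 4 with x x
          · rw [hφ.bijOn.injOn.eq_iff (setOf_eqv_mem A x) hX,
              hφ.bijOn.injOn.eq_iff (setOf_eqv_mem A _) hY,
              setOf_eqv_eq_iff hX, setOf_eqv_eq_iff hY]
          · rw [setOf_eqv_eq_iff hP, setOf_eqv_eq_iff hQ]
        · have h1 : IsEmpty {a : G // φ {y | Eqv A a y} = P ∧ φ {y | Eqv A (a⁻¹ * z) y} = Q} :=
            ⟨fun ⟨a, h, h'⟩ => hc ⟨h ▸ hφ.bijOn.mapsTo (setOf_eqv_mem A a),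
              h' ▸ hφ.bijOn.mapsTo (setOf_eqv_mem A _)⟩⟩
          have h2 : IsEmpty {a : H // {y | Eqv B a y} = P ∧ {y | Eqv B (a⁻¹ * z') y} = Q} :=
            ⟨fun ⟨a, h, h'⟩ => hc ⟨h ▸ setOf_eqv_mem B a, h' ▸ setOf_eqv_mem B _⟩⟩
          simp)
    simp only [Prod.mk.injEq] at he
    refine ⟨e, fun x => ⟨⟨_, setOf_eqv_mem A x, Eqv.rfl' x, ?_⟩,
      ⟨_, setOf_eqv_mem A _, Eqv.rfl' _, ?_⟩⟩⟩
    · rw [← (he x).1]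
      exact Eqv.rfl' _
    · rw [← (he x).2]
      exact Eqv.rfl' _

/-- A bijection sending each `R(X)` into `R(φ X)` sends it onto `R(φ X)`, since the `R(φ X)`
are pairwise disjoint. -/
lemma SepRel.sepAbelian.{u, v} {G : Type u} [Group G] [Finite G] {A : SRing G}
    (hA : SepRel.{u, v} A) : SepAbelian.{u, v} A := by
  intro H _ _ B φ hφ
  obtain ⟨f, hf, hf'⟩ := hA H _ hφ.goodRel
  refine ⟨f, hf, fun X hX => ?_⟩
  have key : ∀ x ∈ X, ∀ g, f (x * g) * (f g)⁻¹ ∈ φ X := by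
    intro x hx g
    obtain ⟨Y, hY, hxY, h⟩ := hf' x g
    rwa [A.eq_of_mem X hX Y hY x hx hxY]
  ext ⟨a, b⟩
  constructor
  · rintro ⟨⟨g, g'⟩, ⟨x, hx, hg⟩, hp⟩
    simp only [Prod.mk.injEq] at hp hg
    obtain ⟨rfl, rfl⟩ := hp
    subst hg
    exact ⟨_, key x hx g, by simp⟩
  · rintro ⟨y, hy, hb⟩
    simp only at hb
    obtain ⟨g, rfl⟩ := hf.2 a
    obtain ⟨g', rfl⟩ := hf.2 b
    refine ⟨(g, g'), ⟨g' * g⁻¹, ?_, by simp⟩, rfl⟩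
    obtain ⟨Y, hY, hxY, h⟩ := hf' (g' * g⁻¹) g
    simp only [inv_mul_cancel_right, hb, mul_inv_cancel_right] at h
    have h1 := B.eq_of_mem _ (hφ.bijOn.mapsTo hX) _ (hφ.bijOn.mapsTo hY) y hy h
    rwa [hφ.bijOn.injOn hX hY h1]

/-- Separability does not depend on the universe of the target groups, every finite group having an
isomorphic copy in every universe. -/
lemma SepRel.lift.{u, v, w} {G : Type u} [Group G] [Finite G] {A : SRing G}
    (hA : SepRel.{u, v} A) : SepRel.{u, w} A := by
  intro H _ _ r hr
  have : Small.{v} H := Countable.toSmall H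
  have : Finite (Shrink.{v} H) := Finite.of_equiv H (equivShrink.{v} H)
  let m : Shrink.{v} H ≃* H := Shrink.mulEquiv
  obtain ⟨f, hf, hf'⟩ := hA (Shrink.{v} H) (fun g h => r g (m h))
    { left := fun g => by
        obtain ⟨h, hh⟩ := hr.left g
        exact ⟨m.symm h, by simpa using hh⟩
      right := fun h => hr.right (m h)
      eqv := fun g g' h => hr.eqv g g' (m h)
      one := fun h h1 => by simpa using hr.one _ h1
      count := fun z z' h => by
        obtain ⟨e, he⟩ := hr.count _ _ h
        exact ⟨e.trans m.symm.toEquiv, fun x => by simpa using he x⟩ }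
  exact ⟨m ∘ f, m.bijective.comp hf, fun x g => by simpa using hf' x g⟩

end Compare

/-! ### Quotients -/

section Quotient

variable {G H : Type*} [CommGroup G] [Finite G] [CommGroup H] {A : SRing G}
  {r : G → H → Prop}

/-- The relation between quotients induced by a relation between groups. -/
def relQ (r : G → H → Prop) (L : Subgroup G) (L' : Subgroup H) (a : G ⧸ L) (b : H ⧸ L') : Prop :=
  ∃ (g : G) (h : H), (g : G ⧸ L) = a ∧ (h : H ⧸ L') = b ∧ r g h

/-- A colour-preserving bijection between groups yields one between quotients by subgroups of
equal order, when the colourings are constant on cosets. -/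
lemma exists_quotient_equiv [Finite H] {C : Type*} {L : Subgroup G} {L' : Subgroup H}
    (hL : Nat.card L = Nat.card L') (k : G ⧸ L → C) (k' : H ⧸ L' → C) (E : G ≃ H)
    (hE : ∀ x : G, k' (E x : H) = k (x : G ⧸ L)) :
    ∃ e : G ⧸ L ≃ H ⧸ L', ∀ a, k' (e a) = k a := by
  apply exists_equiv_of_card
  intro c
  have h1 := Nat.card_congr (QuotientGroup.preimageMkEquivSubgroupProdSet L {a | k a = c})
  have h2 := Nat.card_congr (QuotientGroup.preimageMkEquivSubgroupProdSet L' {a | k' a = c})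
  have h3 : Nat.card ((QuotientGroup.mk : G → G ⧸ L) ⁻¹' {a | k a = c}) =
      Nat.card ((QuotientGroup.mk : H → H ⧸ L') ⁻¹' {a | k' a = c}) :=
    Nat.card_congr (E.subtypeEquiv fun x => by
      change k (x : G ⧸ L) = c ↔ k' (E x : H) = c
      rw [hE])
  rw [h1, h2, Nat.card_prod, Nat.card_prod, hL] at h3
  exact Nat.eq_of_mul_eq_mul_left Nat.card_pos h3

lemma GoodRel.card_img (hr : GoodRel A r) {L : Subgroup G} (hL : IsASubgroup A L) :
    Nat.card L = Nat.card (hr.img hL) := by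
  obtain ⟨e, he⟩ := hr.count 1 1 hr.rel_one
  exact Nat.card_congr (e.subtypeEquiv fun x => (hr.mem_img hL (he x).1).symm)

/-- The relation on quotients can be tested on a prescribed representative in `H`. -/
lemma GoodRel.relQ_right (hr : GoodRel A r) {L : Subgroup G} (hL : IsASubgroup A L) {a : G ⧸ L}
    {h : H} (hab : relQ r L (hr.img hL) a h) : ∃ g : G, (g : G ⧸ L) = a ∧ r g h := by
  obtain ⟨g, h', rfl, hh, hgh⟩ := hab
  rw [QuotientGroup.eq] at hh
  have h1 : r g (h * (h'⁻¹ * h)⁻¹) := by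
    rwa [mul_inv_rev, inv_inv, mul_inv_cancel_left]
  obtain ⟨x, y, hx, hy, rfl⟩ := hr.mul_desc h1
  refine ⟨x, ?_, hx⟩
  rw [QuotientGroup.eq]
  simpa using (hr.mem_img hL hy).1 (inv_mem hh)

/-- The relation on quotients can be tested on a prescribed representative in `G`. -/
lemma GoodRel.relQ_left (hr : GoodRel A r) {L : Subgroup G} (hL : IsASubgroup A L) {g : G}
    {b : H ⧸ hr.img hL} (hab : relQ r L (hr.img hL) g b) :
    ∃ h : H, (h : H ⧸ hr.img hL) = b ∧ r g h := by
  obtain ⟨g', h, hg, rfl, hgh⟩ := hab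
  have h1 : r (g * (g⁻¹ * g')) h := by simpa using hgh
  obtain ⟨x', y', hx, hy, rfl⟩ := hr.mul_lift h1
  refine ⟨x', ?_, hx⟩
  rw [QuotientGroup.eq, inv_mul_cancel_left]
  exact (hr.mem_img hL hy).2 (QuotientGroup.eq.1 hg.symm)

/-- An algebraic isomorphism passes to quotients: the structure constants of the quotient are
those of unions of `L`-cosets divided by `|L|`. -/
lemma GoodRel.quotient [Finite H] (hr : GoodRel A r) {L : Subgroup G} (hL : IsASubgroup A L)
    {AQ : SRing (G ⧸ L)} (hAQ : IsQuotientSRing A L AQ) :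
    GoodRel AQ (relQ r L (hr.img hL)) := by
  have heqv : ∀ a a' b, relQ r L (hr.img hL) a b →
      (relQ r L (hr.img hL) a' b ↔ Eqv AQ a a') := by
    rintro a a' b ⟨g, h, rfl, rfl, hgh⟩
    rw [eqv_quotient_iff hAQ]
    constructor
    · intro h'
      obtain ⟨g', rfl, h1⟩ := hr.relQ_right hL h'
      exact ⟨g, g', hr.to_eqv hgh h1, rfl, rfl⟩
    · rintro ⟨x, y, hxy, hx, rfl⟩
      obtain ⟨h', hh', h1⟩ := hr.relQ_left hL (g := x) ⟨g, h, hx.symm, rfl, hgh⟩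
      exact ⟨y, h', rfl, hh', hr.congr_left h1 hxy⟩
  have hright : ∀ b, ∃ a, relQ r L (hr.img hL) a b := by
    intro b
    induction b using QuotientGroup.induction_on with | _ h
    obtain ⟨g, hg⟩ := hr.right h
    exact ⟨g, g, h, rfl, rfl, hg⟩
  refine ⟨?_, hright, heqv, ?_, ?_⟩
  · intro a
    induction a using QuotientGroup.induction_on with | _ g
    obtain ⟨h, hg⟩ := hr.left g
    exact ⟨h, g, h, rfl, rfl, hg⟩
  · intro b hb
    obtain ⟨h, rfl, hh⟩ := hr.relQ_left hL (g := 1) hb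
    rw [hr.one h hh]
    rfl
  · rintro a b ⟨z, z', rfl, rfl, hz⟩
    obtain ⟨E, hE⟩ := hr.count z z' hz
    have hset : ∀ a b, relQ r L (hr.img hL) a b ↔
        {b' | ∃ a', relQ r L (hr.img hL) a' b ∧ relQ r L (hr.img hL) a' b'} =
          {b' | relQ r L (hr.img hL) a b'} := by
      intro a b
      constructor
      · intro hab
        ext b'
        constructor
        · rintro ⟨a', h1, h2⟩
          exact (heqv _ _ _ h2).2 ((heqv _ _ _ h1).1 hab)
        · intro h
          exact ⟨a, hab, h⟩
      · intro h
        obtain ⟨a', ha'⟩ := hright b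
        have : b ∈ {b' | relQ r L (hr.img hL) a b'} := by
          rw [← h]
          exact ⟨a', ha', ha'⟩
        exact this
    obtain ⟨e, he⟩ := exists_quotient_equiv (hr.card_img hL)
      (fun a => ({b' | relQ r L (hr.img hL) a b'},
        {b' | relQ r L (hr.img hL) (a⁻¹ * (z : G ⧸ L)) b'}))
      (fun b => ({b' | ∃ a', relQ r L (hr.img hL) a' b ∧ relQ r L (hr.img hL) a' b'},
        {b' | ∃ a', relQ r L (hr.img hL) a' (b⁻¹ * (z' : H ⧸ hr.img hL)) ∧
          relQ r L (hr.img hL) a' b'})) E (by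
        intro x
        simp only [Prod.mk.injEq]
        rw [← hset, ← hset]
        exact ⟨⟨x, E x, rfl, rfl, (hE x).1⟩, ⟨_, _, rfl, rfl, (hE x).2⟩⟩)
    simp only [Prod.mk.injEq] at he
    refine ⟨e, fun a => ?_⟩
    rw [hset, hset]
    exact he a

end Quotient

/-! ### Gluing isomorphisms of `A_U` and `A_{G/L}` -/

section Glue

/-- The core of the argument. The hypothesis `hlift` says that `Aut(A_S) ⊆ Aut(A_U)^S`, the
S-ring `A_S` being described through representatives. -/
lemma sepRel_of_lift.{u, v} {G : Type u} [CommGroup G] [Finite G] {A : SRing G} {U L : Subgroup G}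
    (hW : IsSWreath A U L) {AU : SRing U} (hAU : IsRestriction A U AU)
    {AQ : SRing (G ⧸ L)} (hAQ : IsQuotientSRing A L AQ)
    (sU : SepRel.{u, v} AU) (sQ : SepRel.{u, v} AQ)
    (hlift : ∀ e : Equiv.Perm (U ⧸ L.subgroupOf U),
      (∀ x u, ∃ x₁ y₁ : U, Eqv AU x₁ y₁ ∧ (x₁ : U ⧸ L.subgroupOf U) = x ∧
        (y₁ : U ⧸ L.subgroupOf U) = e (x * u) * (e u)⁻¹) →
      ∃ h ∈ autSubgroup AU, ∀ u : U, e (u : U ⧸ L.subgroupOf U) = (h u : U)) :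
    SepRel.{u, v} A := by
  intro H _ _ r hr
  obtain ⟨hU, hL, hLU, -, hrad⟩ := hW
  obtain ⟨f₁, hf₁, hf₁'⟩ := sU (hr.img hU) _ (hr.restrict hU hAU)
  simp only [Subgroup.coe_mul, Subgroup.coe_inv] at hf₁'
  obtain ⟨f₂, hf₂, hf₂'⟩ := sQ (H ⧸ hr.img hL) _ (hr.quotient hL hAQ)
  -- `f₁` maps `L`-cosets to cosets of the image of `L`, injectively.
  have hcos : ∀ v w : U, ((f₁ v : H) : H ⧸ hr.img hL) = (f₁ w : H) ↔
      (v : U ⧸ L.subgroupOf U) = w := by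
    intro v w
    have h1 := hf₁' (w * v⁻¹) v
    rw [inv_mul_cancel_right] at h1
    rw [QuotientGroup.eq, QuotientGroup.eq, Subgroup.mem_subgroupOf, mul_comm,
      hr.mem_img hL h1, mul_comm v⁻¹ w]
  -- On every coset of `U`, `f₂` lifts to a translate of an isomorphism inducing the restriction.
  have hk : ∀ t : G, ∃ k : U → hr.img hU, Function.Bijective k ∧
      (∀ x u : U, r x ((k (x * u) : H) * (k u : H)⁻¹)) ∧
      ∀ u : U, ((k u : H) : H ⧸ hr.img hL) = f₂ ((u * t : G) : G ⧸ L) * (f₂ (t : G ⧸ L))⁻¹ := by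
    intro t
    have hv : ∀ u : U, ∃ v : U, ((f₁ v : H) : H ⧸ hr.img hL) =
        f₂ ((u * t : G) : G ⧸ L) * (f₂ (t : G ⧸ L))⁻¹ := by
      intro u
      have h1 := hf₂' ((u : G) : G ⧸ L) (t : G ⧸ L)
      obtain ⟨h, hh, h2⟩ := hr.relQ_left hL h1
      obtain ⟨v, hv⟩ := hf₁.2 ⟨h, u, u.2, h2⟩
      refine ⟨v, ?_⟩
      rw [hv]
      exact hh
    choose v hv using hv
    have hwd : ∀ u w : U, (v u : U ⧸ L.subgroupOf U) = v w ↔ (u : U ⧸ L.subgroupOf U) = w := by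
      intro u w
      rw [← hcos, hv, hv, mul_left_inj, hf₂.1.eq_iff, QuotientGroup.eq, QuotientGroup.eq,
        Subgroup.mem_subgroupOf]
      have : ((u : G) * t)⁻¹ * (w * t) = ((u⁻¹ * w : U) : G) := by
        simp only [Subgroup.coe_mul, Subgroup.coe_inv]
        rw [mul_inv_rev, mul_comm (w : G) t, mul_comm t⁻¹, mul_assoc, inv_mul_cancel_left]
      rw [this]
    -- `e₀` is the discrepancy between `f₁` and the translate of `f₂`, as a permutation of `U / L`.
    let e₀ : U ⧸ L.subgroupOf U → U ⧸ L.subgroupOf U := fun a => (v a.out : U)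
    have he₀ : ∀ u : U, e₀ (u : U ⧸ L.subgroupOf U) = (v u : U) := by
      intro u
      exact (hwd _ _).2 (Quotient.out_eq' _)
    have hinj : Function.Injective e₀ := by
      intro a b hab
      induction a using QuotientGroup.induction_on with | _ a
      induction b using QuotientGroup.induction_on with | _ b
      rw [he₀, he₀, hwd] at hab
      exact hab
    let e : Equiv.Perm (U ⧸ L.subgroupOf U) :=
      Equiv.ofBijective e₀ (Finite.injective_iff_bijective.1 hinj)
    have he : ∀ u : U, e (u : U ⧸ L.subgroupOf U) = (v u : U) := he₀
    obtain ⟨h, hh, heh⟩ := hlift e (by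
      intro x u
      induction x using QuotientGroup.induction_on with | _ x
      induction u using QuotientGroup.induction_on with | _ u
      have h1 := hf₁' (v (x * u) * (v u)⁻¹) (v u)
      rw [inv_mul_cancel_right] at h1
      have h2 := hf₂' ((x : G) : G ⧸ L) ((u * t : G) : G ⧸ L)
      have h3 : f₂ (((x : G) : G ⧸ L) * ((u * t : G) : G ⧸ L)) * (f₂ ((u * t : G) : G ⧸ L))⁻¹ =
          (((f₁ (v (x * u)) : H) * (f₁ (v u) : H)⁻¹ : H) : H ⧸ hr.img hL) := by
        have h4 : (((f₁ (v (x * u)) : H) * (f₁ (v u) : H)⁻¹ : H) : H ⧸ hr.img hL) =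
          ((f₁ (v (x * u)) : H) : H ⧸ hr.img hL) * ((f₁ (v u) : H) : H ⧸ hr.img hL)⁻¹ := rfl
        have h5 : ((x : G) : G ⧸ L) * ((u * t : G) : G ⧸ L) =
            (((x * u : U) * t : G) : G ⧸ L) := by
          rw [← QuotientGroup.mk_mul, Subgroup.coe_mul, mul_assoc]
        rw [h4, h5, hv, hv, mul_inv_rev, inv_inv, mul_assoc, inv_mul_cancel_left]
      rw [h3] at h2
      obtain ⟨g, hg, h4⟩ := hr.relQ_right hL h2
      have h5 : Eqv A g ((v (x * u) * (v u)⁻¹ : U) : G) := hr.to_eqv h4 h1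
      have hgU : g ∈ U := h5.symm'.mem_subgroup hU (SetLike.coe_mem _)
      refine ⟨⟨g, hgU⟩, v (x * u) * (v u)⁻¹, (eqv_restriction_iff hU hAU _ _).2 h5, ?_, ?_⟩
      · rw [QuotientGroup.eq] at hg ⊢
        exact hg
      · rw [← QuotientGroup.mk_mul, he, he]
        rfl)
    refine ⟨f₁ ∘ h, hf₁.comp h.bijective, ?_, ?_⟩
    · intro x u
      have h1 := eqv_of_mem_autSubgroup hh x u
      rw [eqv_restriction_iff hU hAU] at h1
      have h2 := hf₁' (h (x * u) * (h u)⁻¹) (h u)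
      rw [inv_mul_cancel_right] at h2
      exact hr.congr_left h2 h1.symm'
    · intro u
      rw [← hv, Function.comp_apply, hcos, ← heh, he]
  choose k hkb hkr hkm using hk
  let t : G → G := fun g => (g : G ⧸ U).out
  have ht : ∀ g, g * (t g)⁻¹ ∈ U := by
    intro g
    rw [mul_comm]
    exact QuotientGroup.eq.1 (Quotient.out_eq' (g : G ⧸ U))
  have htU : ∀ x g, x ∈ U → t (x * g) = t g := by
    intro x g hx
    have : ((x * g : G) : G ⧸ U) = g := by
      rw [QuotientGroup.eq]
      simpa [mul_comm] using hx
    simp only [t, this]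
  let t' : G → H := fun g => (f₂ (t g : G ⧸ L)).out
  have ht' : ∀ g, ((t' g : H) : H ⧸ hr.img hL) = f₂ (t g : G ⧸ L) := fun g => Quotient.out_eq' _
  let f : G → H := fun g => (k (t g) ⟨g * (t g)⁻¹, ht g⟩ : H) * t' g
  have hff : ∀ g, ((f g : H) : H ⧸ hr.img hL) = f₂ (g : G ⧸ L) := by
    intro g
    simp only [f]
    rw [QuotientGroup.mk_mul, hkm, ht']
    simp
  -- On the coset `U g`, the map `f` is `k (t g)` up to translations.
  have hfu : ∀ (x : U) g, f (x * g) = (k (t g) (x * ⟨g * (t g)⁻¹, ht g⟩) : H) * t' g := by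
    intro x g
    have h1 := htU x g x.2
    have h2 : t' (x * g) = t' g := by simp only [t', h1]
    simp only [f, h2]
    congr 2
    rw! [h1]
    congr 1
    ext
    simp [mul_assoc]
  refine ⟨f, ⟨?_, ?_⟩, ?_⟩
  · intro g g' h
    have h1 : (g : G ⧸ L) = g' := hf₂.1 (by rw [← hff, ← hff, h])
    rw [QuotientGroup.eq] at h1
    obtain ⟨x, rfl⟩ : ∃ x : U, g' = x * g :=
      ⟨⟨g⁻¹ * g', hLU h1⟩, by simp [mul_comm]⟩
    have h2 := hfu 1 g
    simp only [Subgroup.coe_one, one_mul] at h2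
    rw [h2, hfu, mul_left_inj, Subtype.coe_inj, (hkb _).1.eq_iff] at h
    have h3 : x = 1 := by simpa using h
    simp [h3]
  · intro h
    obtain ⟨a, ha⟩ := hf₂.2 (h : H ⧸ hr.img hL)
    induction a using QuotientGroup.induction_on with | _ g
    rw [← hff, QuotientGroup.eq] at ha
    have h1 : (f g)⁻¹ * h ∈ hr.img hU := by
      obtain ⟨l, hl, hl'⟩ := ha
      exact ⟨l, hLU hl, hl'⟩
    obtain ⟨u, hu⟩ := (hkb (t g)).2 (k (t g) ⟨g * (t g)⁻¹, ht g⟩ * ⟨_, h1⟩)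
    refine ⟨((u * ⟨g * (t g)⁻¹, ht g⟩⁻¹ : U) : G) * g, ?_⟩
    rw [hfu, inv_mul_cancel_right, hu]
    simp only [Subgroup.coe_mul, f]
    rw [mul_right_comm, mul_inv_cancel_left]
  · intro x g
    by_cases hx : x ∈ U
    · have h2 := hfu 1 g
      simp only [Subgroup.coe_one, one_mul] at h2
      have h1 := hfu ⟨x, hx⟩ g
      simp only at h1
      rw [h1, h2]
      have := hkr (t g) ⟨x, hx⟩ ⟨g * (t g)⁻¹, ht g⟩
      rw [mul_inv_rev, mul_assoc, mul_inv_cancel_left]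
      exact this
    · have h1 := hf₂' (x : G ⧸ L) (g : G ⧸ L)
      rw [← QuotientGroup.mk_mul, ← hff, ← hff, ← QuotientGroup.mk_inv, ← QuotientGroup.mk_mul] at h1
      obtain ⟨y, hy, h2⟩ := hr.relQ_right hL h1
      refine hr.congr_left h2 ?_
      -- `y ∈ x L`, and `L` lies in the radical of the basic set of `x`.
      obtain ⟨X, hX, hxX⟩ := A.exists_mem x
      refine ⟨X, hX, ?_, hxX⟩
      have h3 := hrad X hX (fun h => hx (h hxX)) (QuotientGroup.eq.1 hy.symm)
      rw [← h3.2]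
      exact ⟨x, hxX, by simp⟩

end Glue

end SRingPaper

open SRingPaper in
/-- main part: if `A` is the `S`-wreath product over a finite abelian
group `G` for an `A`-section `S = U/L`, the S-rings `A_U` and `A_{G/L}` are
separable w.r.t. finite abelian groups, and `Aut(A_U)^S = Aut(A_S)`, then `A` is
separable w.r.t. finite abelian groups.  In particular (second part), the wreath
product of two separable S-rings (the case `U = L`) is separable. -/
theorem swreath_separable_of_aut_eq :
    (∀ (G : Type*) [CommGroup G] [Finite G] (A : SRing G) (U L : Subgroup G),
      IsSWreath A U L →
      ∀ (AU : SRing ↥U), IsRestriction A U AU →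
      ∀ (AQ : SRing (G ⧸ L)), IsQuotientSRing A L AQ →
      ∀ (AS : SRing (↥U ⧸ L.subgroupOf U)), IsQuotientSRing AU (L.subgroupOf U) AS →
      SepAbelian AU → SepAbelian AQ →
      ((fun e : Equiv.Perm (↥U ⧸ L.subgroupOf U) => ⇑e) ''
          ((autSubgroup AS : Subgroup _) : Set (Equiv.Perm (↥U ⧸ L.subgroupOf U)))
        = inducedOnQuotient AU (L.subgroupOf U)) →
      SepAbelian A)
    ∧
    (∀ (G : Type*) [CommGroup G] [Finite G] (A : SRing G) (L : Subgroup G),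
      IsSWreath A L L →
      ∀ (AL : SRing ↥L), IsRestriction A L AL →
      ∀ (AQ : SRing (G ⧸ L)), IsQuotientSRing A L AQ →
      SepAbelian AL → SepAbelian AQ → SepAbelian A) := by
  constructor
  · intro G _ _ A U L hW AU hAU AQ hAQ AS hAS sU sQ hAut
    refine (sepRel_of_lift hW hAU hAQ sU.sepRel.lift sQ.sepRel.lift ?_).sepAbelian
    intro e he
    have h1 : e ∈ autSubgroup AS :=
      mem_autSubgroup e fun x u => (eqv_quotient_iff hAS _ _).2 (he x u)
    have h2 : ⇑e ∈ inducedOnQuotient AU (L.subgroupOf U) := by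
      rw [← hAut]
      exact ⟨e, h1, rfl⟩
    obtain ⟨h, hh, -, h3⟩ := h2
    exact ⟨h, hh, h3⟩
  · intro G _ _ A L hW AL hAL AQ hAQ sL sQ
    refine (sepRel_of_lift hW hAL hAQ sL.sepRel.lift sQ.sepRel.lift ?_).sepAbelian
    -- Here `U / L` is trivial, so the identity lifts every permutation of it.
    intro e _
    refine ⟨1, one_mem _, fun u => ?_⟩
    obtain ⟨w, hw⟩ := QuotientGroup.mk_surjective (e (u : L ⧸ L.subgroupOf L))
    rw [← hw, QuotientGroup.eq, Subgroup.mem_subgroupOf]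
    exact SetLike.coe_mem _
end

section
/- Let H be a normal subgroup of a finite group G, let ℬ be an S-ring over H, and let φ be an algebraic automorphism of ℬ that is not induced by any isomorphism. Let 𝒜 = ℬ ≀ ℤ(G/H) be the wreath product, i.e. the S-ring over G whose basic sets are the basic sets of ℬ together with the cosets Hg for g ∈ G \ H. Then there exists an algebraic automorphism ψ of 𝒜 that is not induced by any isomorphism and whose restriction to the basic sets contained in H coincides with φ. -/
/-!
The automorphism `φ` is extended to `ψ` on the basic sets of `A` by fixing every coset `Hg` with
`g ∉ H`.

That `ψ` preserves structure constants (`isAlgIso_extendMap`): on triples of basic sets inside `H`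
this is the hypothesis on `φ`. If exactly one of the two factors lies outside `H`, the constant is
either zero or the size of the other factor, according to the cosets of `H` involved; sizes are
preserved by `φ` because `|X| = c^{1}_{X,X⁻¹}` is the maximum of `c^{1}_{X,Y}` over `Y` and `φ`
fixes `{1}` (`IsAlgIso.card_eq`). If both factors lie outside `H`, `ψ` fixes them, and the
constant depends only on the coset of `z`.

That `ψ` is not induced (`inducedBy_of_extension`): if `f` induced `ψ`, then `h ↦ f(h) f(1)⁻¹`
would be a bijection of `H` inducing `φ`.
-/

open scoped Pointwise

namespace SRingPaper

section Aux

variable {G : Type*} [Group G]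

lemma structConst_le_left [Finite G] (X Y : Set G) (z : G) : structConst X Y z ≤ Nat.card X := by
  refine Nat.card_le_card_of_injective (fun p => (⟨p.1.1, p.2.1⟩ : X)) ?_
  rintro ⟨⟨a, b⟩, h1, h2, h3⟩ ⟨⟨c, d⟩, h4, h5, h6⟩ h
  have hac : a = c := congrArg Subtype.val h
  simp only at h3 h6
  subst hac
  have : b = d := mul_left_cancel (h3.trans h6.symm)
  subst this
  rfl

/-- If `x⁻¹ * z ∈ Y` for every `x ∈ X`, each `x ∈ X` is the first factor of exactly one
factorization of `z`. -/
lemma structConst_eq_card_left {X Y : Set G} {z : G} (h : ∀ x ∈ X, x⁻¹ * z ∈ Y) :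
    structConst X Y z = Nat.card X :=
  Nat.card_congr
    { toFun := fun p => ⟨p.1.1, p.2.1⟩
      invFun := fun x => ⟨(x.1, x.1⁻¹ * z), x.2, h x.1 x.2, by simp⟩
      left_inv := by
        rintro ⟨⟨a, b⟩, h1, h2, h3⟩
        simp only at h3
        simp [← h3]
      right_inv := fun x => rfl }

/-- The mirror image of `structConst_eq_card_left`, for second factors. -/
lemma structConst_eq_card_right {X Y : Set G} {z : G} (h : ∀ y ∈ Y, z * y⁻¹ ∈ X) :
    structConst X Y z = Nat.card Y :=
  Nat.card_congr
    { toFun := fun p => ⟨p.1.2, p.2.2.1⟩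
      invFun := fun y => ⟨(z * y.1⁻¹, y.1), h y.1 y.2, y.2, by simp⟩
      left_inv := by
        rintro ⟨⟨a, b⟩, h1, h2, h3⟩
        simp only at h3
        simp [← h3]
      right_inv := fun x => rfl }

lemma structConst_eq_zero {X Y : Set G} {z : G}
    (h : ∀ x ∈ X, ∀ y ∈ Y, x * y ≠ z) : structConst X Y z = 0 := by
  have : IsEmpty {p : G × G // p.1 ∈ X ∧ p.2 ∈ Y ∧ p.1 * p.2 = z} :=
    ⟨fun p => h _ p.2.1 _ p.2.2.1 p.2.2.2⟩
  exact Nat.card_of_isEmpty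

lemma exists_of_structConst_ne_zero {X Y : Set G} {z : G} (h : structConst X Y z ≠ 0) :
    ∃ x ∈ X, ∃ y ∈ Y, x * y = z := by
  by_contra hc
  push Not at hc
  exact h (structConst_eq_zero hc)

/-- Restricting to a subgroup does not change the structure constants. -/
lemma structConst_image_val {H : Subgroup G} (X Y : Set H) (z : H) :
    structConst (Subtype.val '' X : Set G) (Subtype.val '' Y) (z : G) = structConst X Y z := by
  symm
  refine Nat.card_congr (Equiv.ofBijective
    (fun p => ⟨(p.1.1, p.1.2), ⟨_, p.2.1, rfl⟩, ⟨_, p.2.2.1, rfl⟩, ?_⟩) ⟨?_, ?_⟩)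
  · exact congrArg Subtype.val p.2.2.2
  · rintro ⟨⟨a, b⟩, h1⟩ ⟨⟨c, d⟩, h2⟩ h
    simp only [Subtype.mk.injEq, Prod.mk.injEq, Subtype.val_inj] at h
    obtain ⟨rfl, rfl⟩ := h
    rfl
  · rintro ⟨⟨u, v⟩, h1, h2, h⟩
    obtain ⟨a, ha, rfl : (a : G) = u⟩ := id h1
    obtain ⟨b, hb, rfl : (b : G) = v⟩ := id h2
    exact ⟨⟨(a, b), ha, hb, Subtype.ext h⟩, rfl⟩

/-- If `Y` is stable under right multiplication by the normal subgroup `H`, then `structConst X Y`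
is constant on the cosets of `H`. -/
lemma structConst_congr_of_right_invariant {H : Subgroup G} (hH : H.Normal) {X Y : Set G}
    (hY : ∀ y, ∀ h ∈ H, y * h ∈ Y ↔ y ∈ Y) {z z' : G} (hz : z' * z⁻¹ ∈ H) :
    structConst X Y z = structConst X Y z' := by
  have hz1 : z⁻¹ * z' ∈ H := hH.mem_comm hz
  refine Nat.card_congr
    { toFun := fun p => ⟨(p.1.1, p.1.2 * (z⁻¹ * z')), p.2.1, (hY _ _ hz1).2 p.2.2.1, ?_⟩
      invFun := fun p => ⟨(p.1.1, p.1.2 * (z⁻¹ * z')⁻¹), p.2.1,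
        (hY _ _ (H.inv_mem hz1)).2 p.2.2.1, ?_⟩
      left_inv := ?_
      right_inv := ?_ }
  · have := p.2.2.2
    rw [← mul_assoc, this]
    group
  · have := p.2.2.2
    rw [← mul_assoc, this]
    group
  · rintro ⟨⟨a, b⟩, h⟩
    simp [mul_assoc]
  · rintro ⟨⟨a, b⟩, h⟩
    simp [mul_assoc]

/-- An algebraic automorphism fixes the basic set `{1}`, the identity of the ring. -/
lemma IsAlgIso.map_one [Finite G] {B : SRing G} {φ : Set G → Set G} (hφ : IsAlgIso B B φ) :
    φ {1} = {1} := by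
  obtain ⟨Y, hY, hY1⟩ := hφ.bijOn.surjOn B.one_mem
  obtain ⟨y, hy⟩ := B.nonempty_mem Y hY
  have h := hφ.structConst_eq {1} B.one_mem Y hY Y hY y hy 1 (by rw [hY1]; rfl)
  rw [structConst_eq_card_left (by rintro x rfl; simpa using hy), hY1] at h
  obtain ⟨x, hx, z, rfl, hxz⟩ := exists_of_structConst_ne_zero
    (by rw [← h]; simp : structConst (φ {1}) {1} (1 : G) ≠ 0)
  have hx1 : x = 1 := by simpa using hxz
  subst hx1
  exact B.eq_of_mem _ (hφ.bijOn.mapsTo B.one_mem) _ B.one_mem 1 hx rfl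

/-- Algebraic automorphisms preserve the sizes of basic sets, because `|X|` is the largest value
of `c^{1}_{X,Y}` over the basic sets `Y`, attained at `Y = X⁻¹`. -/
lemma IsAlgIso.card_eq [Finite G] {B : SRing G} {φ : Set G → Set G}
    (hφ : IsAlgIso B B φ) {X : Set G} (hX : X ∈ B.parts) : Nat.card (φ X) = Nat.card X := by
  have key : ∀ Y ∈ B.parts, structConst X Y 1 = structConst (φ X) (φ Y) 1 := fun Y hY =>
    hφ.structConst_eq X hX Y hY {1} B.one_mem 1 rfl 1 (by rw [hφ.map_one]; rfl)
  apply le_antisymm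
  · obtain ⟨Y, hY, hYe⟩ := hφ.bijOn.surjOn (B.inv_mem _ (hφ.bijOn.mapsTo hX))
    have h := key Y hY
    rw [hYe, structConst_eq_card_left (X := φ X) (by intro x hx; simpa using hx)] at h
    rw [← h]
    exact structConst_le_left _ _ _
  · have h := key _ (B.inv_mem X hX)
    rw [structConst_eq_card_left (by intro x hx; simpa using hx)] at h
    rw [h]
    exact structConst_le_left _ _ _

open Classical in
/-- The extension of a map `φ` of subsets of `H` to subsets of `G`: it acts as `φ` on subsets
of `H` and fixes every other subset. -/
noncomputable def extendMap (H : Subgroup G) (φ : Set H → Set H) (Y : Set G) : Set G :=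
  if Y ⊆ H then Subtype.val '' φ (Subtype.val ⁻¹' Y) else Y

lemma extendMap_image (H : Subgroup G) (φ : Set H → Set H) (X : Set H) :
    extendMap H φ (Subtype.val '' X) = Subtype.val '' φ X := by
  have : (Subtype.val '' X : Set G) ⊆ H := by rintro _ ⟨x, -, rfl⟩; exact x.2
  rw [extendMap, if_pos this, Set.preimage_image_eq _ Subtype.val_injective]

lemma extendMap_of_not_subset {H : Subgroup G} {φ : Set H → Set H} {Y : Set G}
    (h : ¬ Y ⊆ H) : extendMap H φ Y = Y := if_neg h

/-- If `f` induces an extension of `φ` to `A`, then `h ↦ f(h) f(1)⁻¹` maps `H` to itself and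
induces `φ`. -/
lemma inducedBy_of_extension [Finite G] {A : SRing G} {H : Subgroup G} {B : SRing H}
    {φ : Set H → Set H} {ψ : Set G → Set G} {f : G → G}
    (hBA : ∀ X ∈ B.parts, (Subtype.val '' X : Set G) ∈ A.parts)
    (hψ : ∀ X ∈ B.parts, ψ (Subtype.val '' X) = Subtype.val '' φ X) (hf : InducedBy A ψ f) :
    ∃ f' : H → H, InducedBy B φ f' := by
  obtain ⟨hbij, hind⟩ := hf
  have hrel : ∀ X ∈ B.parts, mapRel f (RSet (Subtype.val '' X)) =
      RSet (Subtype.val '' φ X) := fun X hX => by rw [hind _ (hBA X hX), hψ X hX]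
  have hmem : ∀ h : H, f h * (f 1)⁻¹ ∈ H := by
    intro h
    obtain ⟨X, hX, hhX⟩ := B.exists_mem h
    have : (f 1, f h) ∈ RSet (Subtype.val '' φ X : Set G) := by
      rw [← hrel X hX]
      exact ⟨(1, h), ⟨h, ⟨h, hhX, rfl⟩, by simp⟩, rfl⟩
    obtain ⟨_, ⟨y, -, rfl⟩, hy⟩ := this
    simp only at hy
    simp [hy]
  let f' : H → H := fun h => ⟨f h * (f 1)⁻¹, hmem h⟩
  have hinj : Function.Injective f' := by
    intro a b hab
    have : f a * (f 1)⁻¹ = f b * (f 1)⁻¹ := congrArg Subtype.val hab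
    exact Subtype.ext (hbij.1 (mul_right_cancel this))
  have hbij' : Function.Bijective f' := Finite.injective_iff_bijective.1 hinj
  refine ⟨f', hbij', fun X hX => ?_⟩
  -- Right translation by `f(1)⁻¹` preserves every relation `R(Y)`.
  have hiff : ∀ (a b : H) (Y : Set H), (f' a, f' b) ∈ RSet Y ↔
      (f a, f b) ∈ RSet (Subtype.val '' Y : Set G) := by
    intro a b Y
    constructor
    · rintro ⟨x, hx, h⟩
      have h' : f b * (f 1)⁻¹ = x * (f a * (f 1)⁻¹) := congrArg Subtype.val h
      rw [← mul_assoc] at h'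
      exact ⟨x, ⟨x, hx, rfl⟩, mul_right_cancel h'⟩
    · rintro ⟨_, ⟨x, hx, rfl⟩, h⟩
      simp only at h
      exact ⟨x, hx, Subtype.ext (by simp [f', h, mul_assoc])⟩
  have hsrc : ∀ a b : H, ((a : G), (b : G)) ∈ RSet (Subtype.val '' X : Set G) ↔
      (a, b) ∈ RSet X := by
    intro a b
    constructor
    · rintro ⟨_, ⟨x, hx, rfl⟩, h⟩
      exact ⟨x, hx, Subtype.ext h⟩
    · rintro ⟨x, hx, h⟩
      exact ⟨x, ⟨x, hx, rfl⟩, congrArg Subtype.val h⟩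
  ext ⟨p, q⟩
  obtain ⟨a, rfl⟩ := hbij'.2 p
  obtain ⟨b, rfl⟩ := hbij'.2 q
  rw [hiff, ← hrel X hX]
  constructor
  · rintro ⟨⟨c, d⟩, hcd, h⟩
    simp only [Prod.mk.injEq] at h
    obtain ⟨h1, h2⟩ := h
    obtain rfl := hinj h1
    obtain rfl := hinj h2
    exact ⟨((c : G), (d : G)), (hsrc c d).2 hcd, rfl⟩
  · rintro ⟨⟨c, d⟩, hcd, h⟩
    simp only [Prod.mk.injEq] at h
    obtain ⟨h1, h2⟩ := h
    obtain rfl := hbij.1 h1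
    obtain rfl := hbij.1 h2
    exact ⟨(a, b), (hsrc a b).1 hcd, rfl⟩

/-- The extension by the identity on the cosets outside `H` is an algebraic automorphism. A
structure constant with an argument outside `H` depends only on the sizes of the basic
sets and on the cosets of `H` involved. -/
lemma isAlgIso_extendMap [Finite G] {H : Subgroup G} (hH : H.Normal) {B : SRing H}
    {φ : Set H → Set H} (hφ : IsAlgIso B B φ) {A : SRing G}
    (hA : A.parts = {Y : Set G |
      (∃ X ∈ B.parts, Y = (Subtype.val '' X : Set G)) ∨
      (∃ g : G, g ∉ H ∧ Y = {y : G | ∃ h ∈ H, y = h * g})}) :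
    IsAlgIso A A (extendMap H φ) := by
  have hin : ∀ X ∈ B.parts, (Subtype.val '' X : Set G) ∈ A.parts := fun X hX => by
    rw [hA]; exact Or.inl ⟨X, hX, rfl⟩
  have hval : ∀ X : Set H, (Subtype.val '' X : Set G) ⊆ H := by
    rintro X _ ⟨x, -, rfl⟩; exact x.2
  -- A basic set not coming from `B` is a coset `Hg`, described by its membership criterion.
  have hcases : ∀ Y ∈ A.parts, (∃ X ∈ B.parts, Y = Subtype.val '' X) ∨
      (extendMap H φ Y = Y ∧ ∃ g : G, g ∉ H ∧ ∀ y, y ∈ Y ↔ y * g⁻¹ ∈ H) := by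
    intro Y hY
    rw [hA] at hY
    rcases hY with hY | ⟨g, hg, rfl⟩
    · exact Or.inl hY
    · refine Or.inr ⟨extendMap_of_not_subset fun hs => hg (hs ⟨1, H.one_mem, by simp⟩), g, hg,
        fun y => ⟨?_, fun hy => ⟨_, hy, by simp⟩⟩⟩
      rintro ⟨h, hh, rfl⟩
      simpa using hh
  have hmaps : Set.MapsTo (extendMap H φ) A.parts A.parts := by
    intro Y hY
    rcases hcases Y hY with ⟨X, hX, rfl⟩ | ⟨he, -⟩
    · rw [extendMap_image]; exact hin _ (hφ.bijOn.mapsTo hX)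
    · rwa [he]
  have hout : ∀ {Y : Set G} {g : G}, g ∉ H → (∀ y, y ∈ Y ↔ y * g⁻¹ ∈ H) →
      ¬ Y ⊆ H := by
    intro Y g hg hY hs
    exact hg (hs ((hY g).2 (by simp)))
  have hleft : ∀ {Y : Set G} {g : G}, (∀ y, y ∈ Y ↔ y * g⁻¹ ∈ H) →
      ∀ y, ∀ h ∈ H, h * y ∈ Y ↔ y ∈ Y := by
    intro Y g hY y h hh
    rw [hY, hY, mul_assoc]
    exact H.mul_mem_cancel_left hh
  have hright : ∀ {Y : Set G} {g : G}, (∀ y, y ∈ Y ↔ y * g⁻¹ ∈ H) →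
      ∀ y, ∀ h ∈ H, y * h ∈ Y ↔ y ∈ Y := by
    intro Y g hY y h hh
    rw [← hleft hY y (y * h * y⁻¹) (hH.conj_mem h hh y)]
    simp
  refine ⟨⟨hmaps, ?_, ?_⟩, ?_⟩
  · intro Y hY Y' hY' he
    rcases hcases Y hY with ⟨X, hX, rfl⟩ | ⟨h1, g, hg, h2⟩ <;>
    rcases hcases Y' hY' with ⟨X', hX', rfl⟩ | ⟨h1', g', hg', h2'⟩
    · rw [extendMap_image, extendMap_image] at he
      rw [hφ.bijOn.injOn hX hX' (Subtype.val_injective.image_injective he)]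
    · rw [extendMap_image, h1'] at he
      exact absurd (he ▸ hval _) (hout hg' h2')
    · rw [extendMap_image, h1] at he
      exact absurd (he ▸ hval _) (hout hg h2)
    · rwa [h1, h1'] at he
  · intro Y hY
    rcases hcases Y hY with ⟨X, hX, rfl⟩ | ⟨he, -⟩
    · obtain ⟨X', hX', rfl⟩ := hφ.bijOn.surjOn hX
      exact ⟨_, hin X' hX', extendMap_image _ _ _⟩
    · exact ⟨Y, hY, he⟩
  · intro X hX Y hY Z hZ z hz z' hz'
    have hzz : z' * z⁻¹ ∈ H := by
      -- The extended map preserves the coset of `H` containing a basic set.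
      rcases hcases Z hZ with ⟨Z, hZ, rfl⟩ | ⟨he, g, hg, h2⟩
      · rw [extendMap_image] at hz'
        exact H.mul_mem (hval _ hz') (H.inv_mem (hval _ hz))
      · rw [he, h2] at hz'
        rw [h2] at hz
        have := H.mul_mem hz' (H.inv_mem hz)
        simpa using this
    rcases hcases Y hY with ⟨Y, hYB, rfl⟩ | ⟨hYe, gY, hgY, hYg⟩
    · rcases hcases X hX with ⟨X, hXB, rfl⟩ | ⟨hXe, gX, hgX, hXg⟩
      · rw [extendMap_image, extendMap_image]
        rcases hcases Z hZ with ⟨Z, hZB, rfl⟩ | ⟨hZe, gZ, hgZ, hZg⟩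
        · rw [extendMap_image] at hz'
          obtain ⟨z, hz, rfl⟩ := hz
          obtain ⟨z', hz', rfl⟩ := hz'
          rw [structConst_image_val, structConst_image_val]
          exact hφ.structConst_eq X hXB Y hYB Z hZB z hz z' hz'
        · rw [hZe] at hz'
          have hnot : ∀ w ∈ Z, w ∉ H := by
            intro w hw hwH
            apply hgZ
            rw [hZg, H.mul_mem_cancel_left hwH] at hw
            simpa using hw
          rw [structConst_eq_zero, structConst_eq_zero]
          · rintro x hx y hy rfl
            exact hnot _ hz' (H.mul_mem (hval _ hx) (hval _ hy))
          · rintro x hx y hy rfl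
            exact hnot _ hz (H.mul_mem (hval _ hx) (hval _ hy))
      · rw [hXe, extendMap_image]
        have hzX : z' ∈ X ↔ z ∈ X := by
          rw [← hleft hXg z _ hzz]; simp
        by_cases hzm : z ∈ X
        · rw [structConst_eq_card_right, structConst_eq_card_right,
            Nat.card_image_of_injective Subtype.val_injective,
            Nat.card_image_of_injective Subtype.val_injective, hφ.card_eq hYB]
          · intro y hy
            exact (hright hXg _ _ (H.inv_mem (hval _ hy))).2 (hzX.2 hzm)
          · intro y hy
            exact (hright hXg _ _ (H.inv_mem (hval _ hy))).2 hzm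
        · rw [structConst_eq_zero, structConst_eq_zero]
          · rintro x hx y hy rfl
            exact hzm (hzX.1 ((hright hXg _ _ (hval _ hy)).2 hx))
          · rintro x hx y hy rfl
            exact hzm ((hright hXg _ _ (hval _ hy)).2 hx)
    · rw [hYe, structConst_congr_of_right_invariant hH (hright hYg) hzz]
      rcases hcases X hX with ⟨X, hXB, rfl⟩ | ⟨hXe, -⟩
      · rw [extendMap_image]
        by_cases hzm : z' ∈ Y
        · rw [structConst_eq_card_left, structConst_eq_card_left,
            Nat.card_image_of_injective Subtype.val_injective,
            Nat.card_image_of_injective Subtype.val_injective, hφ.card_eq hXB]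
          · intro x hx
            exact (hleft hYg _ _ (H.inv_mem (hval _ hx))).2 hzm
          · intro x hx
            exact (hleft hYg _ _ (H.inv_mem (hval _ hx))).2 hzm
        · rw [structConst_eq_zero, structConst_eq_zero]
          · rintro x hx y hy rfl
            exact hzm ((hleft hYg _ _ (hval _ hx)).2 hy)
          · rintro x hx y hy rfl
            exact hzm ((hleft hYg _ _ (hval _ hx)).2 hy)
      · rw [hXe]

end Aux

end SRingPaper

open SRingPaper in
/-- if `H ⊴ G`, `B` is an S-ring over `H`, and `φ` is an algebraic
automorphism of `B` not induced by any isomorphism, then the wreath product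
`A = B ≀ ℤ(G/H)` (whose basic sets are the basic sets of `B` together with the
cosets `Hg`, `g ∉ H`) has an algebraic automorphism `ψ` not induced by any
isomorphism whose restriction to the basic sets inside `H` coincides with `φ`. -/
theorem wreath_with_group_ring_nonseparable
    (G : Type*) [Group G] [Finite G] (H : Subgroup G) (hH : H.Normal)
    (B : SRing ↥H) (φ : Set ↥H → Set ↥H)
    (hφ : IsAlgIso B B φ) (hnot : ¬ ∃ f : ↥H → ↥H, InducedBy B φ f)
    (A : SRing G)
    (hA : A.parts = {Y : Set G |
      (∃ X ∈ B.parts, Y = (Subtype.val '' X : Set G)) ∨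
      (∃ g : G, g ∉ H ∧ Y = {y : G | ∃ h ∈ H, y = h * g})}) :
    ∃ ψ : Set G → Set G, IsAlgIso A A ψ ∧ (¬ ∃ f : G → G, InducedBy A ψ f) ∧
      ∀ X ∈ B.parts, ψ (Subtype.val '' X) = Subtype.val '' (φ X) := by
  have hψ : ∀ X ∈ B.parts, extendMap H φ (Subtype.val '' X) = Subtype.val '' (φ X) :=
    fun X _ => extendMap_image H φ X
  refine ⟨extendMap H φ, isAlgIso_extendMap hH hφ hA, ?_, hψ⟩
  rintro ⟨f, hf⟩
  exact hnot (inducedBy_of_extension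
    (fun X hX => by rw [hA]; exact Or.inl ⟨X, hX, rfl⟩) hψ hf)
end
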